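/- Let n ≥ 2 be an integer and suppose the one-dimensional n-adic grids 𝒢_1 = 𝒢(δ_1, ℒ_{𝐚_1}) and 𝒢_2 = 𝒢(δ_2, ℒ_{𝐚_2}) are adjacent on ℝ, with C_1 := liminf_{j→∞} |(ℒ_{𝐚_1}(j) − ℒ_{𝐚_2}(j))/n^j| and C_2 := limsup_{j→∞} |(ℒ_{𝐚_1}(j) − ℒ_{𝐚_2}(j))/n^j|. Let 𝒢(δ'_1, ℒ_{𝐚'_1}) and 𝒢(δ'_2, ℒ_{𝐚'_2}) be any other representations of 𝒢_1 and 𝒢_2 respectively (i.e., 𝒢(δ'_i, ℒ_{𝐚'_i}) = 𝒢_i as collections of intervals). Then either liminf_{j→∞} |(ℒ_{𝐚'_1}(j) − ℒ_{𝐚'_2}(j))/n^j| = C_1 and limsup_{j→∞} |(ℒ_{𝐚'_1}(j) − ℒ_{𝐚'_2}(j))/n^j| = C_2, or liminf_{j→∞} |(ℒ_{𝐚'_1}(j) − ℒ_{𝐚'_2}(j))/n^j| = 1 − C_2 and limsup_{j→∞} |(ℒ_{𝐚'_1}(j) − ℒ_{𝐚'_2}(j))/n^j| = 1 − C_1. 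-/

import Mathlib

/-!
Write `L`, `L'` for the location functions of two representations of the same grid. Comparing the
endpoints of the intervals of length `n ^ j` gives `L' j = L j + c + k_j * n ^ j`, where
`c = δ - δ'` and `k_j` is an integer (`exists_shift_of_gridRep_eq`). Since `L j` and `L' j` lie in
`[0, n ^ j)`, eventually `|k_j| ≤ 1`; comparing consecutive generations gives
`|n * k_{j+1} - k_j| < n`, so `0` is absorbing and the sign cannot jump, and `k_j` is eventually
constant (`eventually_const_shift`).

Hence the signed normalized differences `x_j`, `y_j ∈ (-1, 1)` of the two pairs of representations
satisfy `y_j = x_j + k + o(1)` with a fixed integer `|k| ≤ 2`. If `k = 0`, then `|y_j| - |x_j| → 0`.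
If `k = ±1`, then `x_j` and `y_j` have opposite signs up to `o(1)`, so `|y_j| - (1 - |x_j|) → 0`.
If `k = ±2`, both `|x_j|` and `|y_j|` tend to `1`. The liminf and limsup are therefore either kept
or reflected by `t ↦ 1 - t`.
-/

/-- `G` is an `n`-adic grid on `ℝ` (a collection of half-open intervals). -/
def IsNAdicGrid1 (n : ℕ) (G : Set (Set ℝ)) : Prop :=
  (∀ I ∈ G, ∃ (a : ℝ) (k : ℤ), I = Set.Ico a (a + (n : ℝ) ^ k)) ∧
  (∀ I ∈ G, ∀ J ∈ G, I ∩ J = I ∨ I ∩ J = J ∨ I ∩ J = ∅) ∧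
  (∀ k : ℤ, ∀ y : ℝ, ∃! I, I ∈ G ∧ (∃ a : ℝ, I = Set.Ico a (a + (n : ℝ) ^ k)) ∧ y ∈ I)

/-- Two `n`-adic grids on `ℝ` are adjacent: there is `C > 0` such that every half-open
interval is contained in some interval of one of the two grids of length at most `C` times
its own. -/
def AdjacentPair1 (n : ℕ) (G₁ G₂ : Set (Set ℝ)) : Prop :=
  ∃ C > (0 : ℝ), ∀ (x ℓ : ℝ), 0 < ℓ →
    ∃ J : Set ℝ, (J ∈ G₁ ∨ J ∈ G₂) ∧ Set.Ico x (x + ℓ) ⊆ J ∧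
      ∃ (b s : ℝ), J = Set.Ico b (b + s) ∧ s ≤ C * ℓ

/-- One-dimensional location function `ℒ_𝐚(j) = Σ_{k<j} a_k n^k`. -/
def locFun1 (n : ℕ) (a : ℕ → ℕ) (j : ℕ) : ℤ :=
  ∑ k ∈ Finset.range j, (a k : ℤ) * (n : ℤ) ^ k

/-- The one-dimensional `n`-adic grid `𝒢(δ, ℒ_𝐚)`. -/
def GridRep1 (n : ℕ) (δ : ℝ) (a : ℕ → ℕ) : Set (Set ℝ) :=
  {I | (∃ (m : ℕ) (k : ℤ),
          I = Set.Ico (δ + (k : ℝ) * (n : ℝ) ^ (-(m : ℤ)))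
                (δ + (k : ℝ) * (n : ℝ) ^ (-(m : ℤ)) + (n : ℝ) ^ (-(m : ℤ)))) ∨
       (∃ (j : ℕ) (k : ℤ), 0 < j ∧
          I = Set.Ico (δ + (locFun1 n a j : ℝ) + (k : ℝ) * (n : ℝ) ^ (j : ℕ))
                (δ + (locFun1 n a j : ℝ) + (k : ℝ) * (n : ℝ) ^ (j : ℕ) + (n : ℝ) ^ (j : ℕ)))}

open Filter Topology

/-! ### Location functions of representations of one grid -/

lemma locFun1_succ (n : ℕ) (a : ℕ → ℕ) (j : ℕ) :
    locFun1 n a (j + 1) = locFun1 n a j + a j * (n : ℤ) ^ j := by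
  simp [locFun1, Finset.sum_range_succ]

lemma locFun1_nonneg (n : ℕ) (a : ℕ → ℕ) (j : ℕ) : 0 ≤ locFun1 n a j :=
  Finset.sum_nonneg fun _ _ => by positivity

lemma locFun1_lt {n : ℕ} {a : ℕ → ℕ} (ha : ∀ j, a j < n) (j : ℕ) :
    locFun1 n a j < (n : ℤ) ^ j := by
  induction j with
  | zero => simp [locFun1]
  | succ j ih =>
    rw [locFun1_succ, pow_succ]
    have h : (a j : ℤ) + 1 ≤ n := by exact_mod_cast ha j
    have h2 : (0 : ℤ) ≤ (n : ℤ) ^ j := by positivity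
    nlinarith

/-- Two representations of the same grid have, at each generation `j ≥ 1`, location functions
differing by the offset `δ - δ'` modulo `n ^ j`. -/
lemma exists_shift_of_gridRep_eq {n : ℕ} (hn : 2 ≤ n) {δ δ' : ℝ} {a a' : ℕ → ℕ}
    (h : GridRep1 n δ' a' = GridRep1 n δ a) {j : ℕ} (hj : 0 < j) :
    ∃ k : ℤ, (locFun1 n a' j : ℝ) = locFun1 n a j + (δ - δ') + k * (n : ℝ) ^ j := by
  have hn1 : (1 : ℝ) < n := by exact_mod_cast hn
  have hpos : (0 : ℝ) < (n : ℝ) ^ j := by positivity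
  have hmem : Set.Ico (δ' + (locFun1 n a' j : ℝ) + ((0 : ℤ) : ℝ) * (n : ℝ) ^ j)
      (δ' + (locFun1 n a' j : ℝ) + ((0 : ℤ) : ℝ) * (n : ℝ) ^ j + (n : ℝ) ^ j)
      ∈ GridRep1 n δ a := h ▸ Or.inr ⟨j, 0, hj, rfl⟩
  rcases hmem with ⟨m, k, e⟩ | ⟨i, k, -, e⟩
  · -- an interval of length `n ^ j > 1` is not one of length `n ^ (-m) ≤ 1`
    rw [Set.Ico_eq_Ico_iff (Or.inl (by linarith))] at e
    have h1 : (1 : ℝ) < (n : ℝ) ^ j := one_lt_pow₀ hn1 hj.ne'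
    have h2 : (n : ℝ) ^ (-(m : ℤ)) ≤ 1 := zpow_le_one_of_nonpos₀ hn1.le (by simp)
    linarith [e.1, e.2]
  · rw [Set.Ico_eq_Ico_iff (Or.inl (by linarith))] at e
    have h1 : (n : ℝ) ^ j = (n : ℝ) ^ i := by linarith [e.1, e.2]
    obtain rfl : j = i := pow_right_injective₀ (by linarith) hn1.ne' h1
    refine ⟨k, ?_⟩
    have := e.1
    push_cast at this
    linarith

/-- The number of periods `n ^ j` in the shift between two representations of one grid is
eventually constant, and is `-1`, `0` or `1`. -/
lemma eventually_const_shift {n : ℕ} (hn : 2 ≤ n) {δ δ' : ℝ} {a a' : ℕ → ℕ}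
    (ha : ∀ j, a j < n) (ha' : ∀ j, a' j < n)
    (h : GridRep1 n δ' a' = GridRep1 n δ a) :
    ∃ k : ℤ, |k| ≤ 1 ∧ ∀ᶠ j : ℕ in atTop,
      (locFun1 n a' j : ℝ) = locFun1 n a j + (δ - δ') + k * (n : ℝ) ^ j := by
  have hn1 : (1 : ℝ) < n := by exact_mod_cast hn
  choose k hk using fun j : ℕ => exists_shift_of_gridRep_eq hn h (Nat.succ_pos j)
  have hstep : ∀ j, |(n : ℤ) * k (j + 1) - k j| < n := by
    intro j
    have e1 := hk j
    have e2 := hk (j + 1)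
    simp only [Nat.succ_eq_add_one] at e1 e2
    rw [locFun1_succ n a (j + 1), locFun1_succ n a' (j + 1)] at e2
    push_cast at e2
    have hp : (n : ℝ) ^ (j + 1) ≠ 0 := by positivity
    have e3 : (n : ℝ) * k (j + 1) - k j = (a' (j + 1) : ℝ) - a (j + 1) := by
      apply mul_right_cancel₀ hp
      rw [pow_succ (n : ℝ) (j + 1)] at e2
      linarith
    have e4 : (n : ℤ) * k (j + 1) - k j = (a' (j + 1) : ℤ) - a (j + 1) := by exact_mod_cast e3
    rw [e4, abs_lt]
    have := ha (j + 1)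
    have := ha' (j + 1)
    constructor <;> omega
  obtain ⟨J, hJ⟩ : ∃ J : ℕ, ∀ j ≥ J, |k j| ≤ 1 := by
    have ht : Tendsto (fun j : ℕ => (n : ℝ) ^ (j + 1)) atTop atTop :=
      (tendsto_pow_atTop_atTop_of_one_lt hn1).comp (tendsto_add_atTop_nat 1)
    obtain ⟨J, hJ⟩ := eventually_atTop.1 (ht.eventually_gt_atTop |δ - δ'|)
    refine ⟨J, fun j hj => ?_⟩
    have hc := abs_lt.1 (hJ j hj)
    have e := hk j
    simp only [Nat.succ_eq_add_one] at e
    have b1 : (0 : ℝ) ≤ locFun1 n a (j + 1) := by exact_mod_cast locFun1_nonneg n a _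
    have b2 : (0 : ℝ) ≤ locFun1 n a' (j + 1) := by exact_mod_cast locFun1_nonneg n a' _
    have b3 : (locFun1 n a (j + 1) : ℝ) < (n : ℝ) ^ (j + 1) := by exact_mod_cast locFun1_lt ha _
    have b4 : (locFun1 n a' (j + 1) : ℝ) < (n : ℝ) ^ (j + 1) := by exact_mod_cast locFun1_lt ha' _
    have hp : (0 : ℝ) < (n : ℝ) ^ (j + 1) := by positivity
    have u1 : (k j : ℝ) < 2 := by
      by_contra! hh
      nlinarith
    have u2 : (-2 : ℝ) < k j := by
      by_contra! hh
      nlinarith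
    have u1' : k j < 2 := by exact_mod_cast u1
    have u2' : -2 < k j := by exact_mod_cast u2
    rw [abs_le]
    constructor <;> omega
  have hnZ : (2 : ℤ) ≤ n := by exact_mod_cast hn
  obtain ⟨K, hJK, hK⟩ : ∃ K ≥ J, ∀ j ≥ K, k j = k K := by
    by_cases hz : ∃ K ≥ J, k K = 0
    · obtain ⟨K, hKJ, hK⟩ := hz
      refine ⟨K, hKJ, fun j hj => ?_⟩
      induction j, hj using Nat.le_induction with
      | base => rfl
      | succ j hj ih =>
        have := abs_lt.1 (hstep j)
        rw [ih, hK] at this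
        rw [hK]
        have p1 : k (j + 1) < 1 := by nlinarith
        have p2 : -1 < k (j + 1) := by nlinarith
        omega
    · -- without a zero, every later value is `1` or `-1`, and a sign change would need `n + 1 < n`
      push Not at hz
      refine ⟨J, le_rfl, fun j hj => ?_⟩
      induction j, hj using Nat.le_induction with
      | base => rfl
      | succ j hj ih =>
        rw [← ih]
        have h1 := abs_lt.1 (hstep j)
        have h2 := abs_le.1 (hJ j hj)
        have h3 := abs_le.1 (hJ (j + 1) (by omega))
        have h4 := hz j hj
        have h5 := hz (j + 1) (by omega)
        have h6 : k j = 1 ∨ k j = -1 := by omega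
        have h7 : k (j + 1) = 1 ∨ k (j + 1) = -1 := by omega
        rcases h6 with h6 | h6 <;> rcases h7 with h7 | h7 <;> rw [h6, h7] at h1 ⊢ <;> omega
  refine ⟨k K, hJ K hJK, ?_⟩
  filter_upwards [eventually_ge_atTop (K + 1)] with j hj
  obtain ⟨i, rfl⟩ : ∃ i, j = i + 1 := ⟨j - 1, by omega⟩
  rw [← hK i (by omega)]
  exact hk i

/-! ### Lower and upper limits of asymptotically equal sequences in `[0, 1]` -/

lemma liminf_le_liminf_of_sub_tendsto {u v : ℕ → ℝ} (hu : ∀ j, u j ∈ Set.Icc (0 : ℝ) 1)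
    (hv : ∀ j, v j ∈ Set.Icc (0 : ℝ) 1) (h : Tendsto (fun j => v j - u j) atTop (𝓝 0)) :
    liminf u atTop ≤ liminf v atTop := by
  refine le_of_forall_pos_sub_le fun ε hε => ?_
  have h1 : ∀ᶠ j in atTop, liminf u atTop - ε / 2 < u j :=
    eventually_lt_of_lt_liminf (by linarith) (isBoundedUnder_of ⟨0, fun j => (hu j).1⟩)
  have h2 : ∀ᶠ j in atTop, -(ε / 2) < v j - u j := h.eventually_const_lt (by linarith)
  refine le_liminf_of_le
    (IsBoundedUnder.isCoboundedUnder_ge (isBoundedUnder_of ⟨1, fun j => (hv j).2⟩)) ?_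
  filter_upwards [h1, h2] with j h1 h2
  linarith

lemma liminf_eq_of_sub_tendsto {u v : ℕ → ℝ} (hu : ∀ j, u j ∈ Set.Icc (0 : ℝ) 1)
    (hv : ∀ j, v j ∈ Set.Icc (0 : ℝ) 1) (h : Tendsto (fun j => v j - u j) atTop (𝓝 0)) :
    liminf v atTop = liminf u atTop :=
  le_antisymm (liminf_le_liminf_of_sub_tendsto hv hu (by simpa using h.neg))
    (liminf_le_liminf_of_sub_tendsto hu hv h)

lemma liminf_one_sub {u : ℕ → ℝ} (hu : ∀ j, u j ∈ Set.Icc (0 : ℝ) 1) :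
    liminf (fun j => 1 - u j) atTop = 1 - limsup u atTop :=
  liminf_const_sub atTop u 1 (isBoundedUnder_of ⟨1, fun j => (hu j).2⟩)
    (IsBoundedUnder.isCoboundedUnder_le (isBoundedUnder_of ⟨0, fun j => (hu j).1⟩))

lemma limsup_one_sub {u : ℕ → ℝ} (hu : ∀ j, u j ∈ Set.Icc (0 : ℝ) 1) :
    limsup (fun j => 1 - u j) atTop = 1 - liminf u atTop :=
  limsup_const_sub atTop u 1
    (IsBoundedUnder.isCoboundedUnder_ge (isBoundedUnder_of ⟨1, fun j => (hu j).2⟩))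
    (isBoundedUnder_of ⟨0, fun j => (hu j).1⟩)

lemma one_sub_mem_Icc {u : ℕ → ℝ} (hu : ∀ j, u j ∈ Set.Icc (0 : ℝ) 1) (j : ℕ) :
    1 - u j ∈ Set.Icc (0 : ℝ) 1 :=
  ⟨by linarith [(hu j).2], by linarith [(hu j).1]⟩

lemma limsup_eq_of_sub_tendsto {u v : ℕ → ℝ} (hu : ∀ j, u j ∈ Set.Icc (0 : ℝ) 1)
    (hv : ∀ j, v j ∈ Set.Icc (0 : ℝ) 1) (h : Tendsto (fun j => v j - u j) atTop (𝓝 0)) :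
    limsup v atTop = limsup u atTop := by
  have := liminf_eq_of_sub_tendsto (one_sub_mem_Icc hu) (one_sub_mem_Icc hv)
    (by simpa using h.neg)
  rw [liminf_one_sub hu, liminf_one_sub hv] at this
  linarith

/-! ### Normalized differences of location functions -/

lemma normalized_diff_mem_Icc {n : ℕ} (hn : 2 ≤ n) {a b : ℕ → ℕ} (ha : ∀ j, a j < n)
    (hb : ∀ j, b j < n) (j : ℕ) :
    |(locFun1 n a j : ℝ) - (locFun1 n b j : ℝ)| / (n : ℝ) ^ j ∈ Set.Icc (0 : ℝ) 1 := by
  have hn0 : (0 : ℝ) < n := by exact_mod_cast (by omega : 0 < n)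
  have hp : (0 : ℝ) < (n : ℝ) ^ j := by positivity
  refine ⟨by positivity, ?_⟩
  have b1 : (0 : ℝ) ≤ locFun1 n a j := by exact_mod_cast locFun1_nonneg n a _
  have b2 : (0 : ℝ) ≤ locFun1 n b j := by exact_mod_cast locFun1_nonneg n b _
  have b3 : (locFun1 n a j : ℝ) < (n : ℝ) ^ j := by exact_mod_cast locFun1_lt ha _
  have b4 : (locFun1 n b j : ℝ) < (n : ℝ) ^ j := by exact_mod_cast locFun1_lt hb _
  rw [div_le_one hp, abs_le]
  constructor <;> linarith

/-- If `y = x + ε` modulo an even integer of size at most `2`, the sizes of `x, y ∈ [-1, 1]` are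
close. -/
lemma abs_norm_diff_le_of_even {x y ε : ℝ} {k : ℤ} (hx : |x| ≤ 1) (hy : |y| ≤ 1)
    (h : y = x + ε + k) (hk : k = 0 ∨ k = 2 ∨ k = -2) : |(|y| - |x|)| ≤ |ε| := by
  rcases hk with rfl | rfl | rfl <;> push_cast at h <;>
    rcases abs_cases x with hx' | hx' <;> rcases abs_cases y with hy' | hy' <;>
    rcases abs_cases ε with he | he <;> rw [abs_le] <;> constructor <;> linarith

/-- If `y = x + ε ± 1` with `x, y ∈ [-1, 1]`, then `|y|` is close to `1 - |x|`. -/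
lemma abs_norm_diff_le_of_odd {x y ε : ℝ} {k : ℤ} (hx : |x| ≤ 1) (hy : |y| ≤ 1)
    (h : y = x + ε + k) (hk : k = 1 ∨ k = -1) : |(|y| - (1 - |x|))| ≤ 3 * |ε| := by
  rcases hk with rfl | rfl <;> push_cast at h <;>
    rcases abs_cases x with hx' | hx' <;> rcases abs_cases y with hy' | hy' <;>
    rcases abs_cases ε with he | he <;> rw [abs_le] <;> constructor <;> linarith

/-- Uniformity of the representation (Theorem 2.5 / [AHJOW, Theorem 3.14]): if two adjacent
one-dimensional grids are re-represented, the liminf/limsup pair `(C₁, C₂)` of the normalized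
difference of location functions either stays the same or becomes `(1 - C₂, 1 - C₁)`. -/
theorem stmt6 (n : ℕ) (hn : 2 ≤ n)
    (δ₁ δ₂ δ₁' δ₂' : ℝ) (a₁ a₂ a₁' a₂' : ℕ → ℕ)
    (ha₁ : ∀ j, a₁ j < n) (ha₂ : ∀ j, a₂ j < n)
    (ha₁' : ∀ j, a₁' j < n) (ha₂' : ∀ j, a₂' j < n)
    (hadj : AdjacentPair1 n (GridRep1 n δ₁ a₁) (GridRep1 n δ₂ a₂))
    (h₁ : GridRep1 n δ₁' a₁' = GridRep1 n δ₁ a₁)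
    (h₂ : GridRep1 n δ₂' a₂' = GridRep1 n δ₂ a₂)
    (C₁ C₂ : ℝ)
    (hC₁ : C₁ = Filter.liminf
        (fun j : ℕ => |(locFun1 n a₁ j : ℝ) - (locFun1 n a₂ j : ℝ)| / (n : ℝ) ^ j)
        Filter.atTop)
    (hC₂ : C₂ = Filter.limsup
        (fun j : ℕ => |(locFun1 n a₁ j : ℝ) - (locFun1 n a₂ j : ℝ)| / (n : ℝ) ^ j)
        Filter.atTop) :
    (Filter.liminf
        (fun j : ℕ => |(locFun1 n a₁' j : ℝ) - (locFun1 n a₂' j : ℝ)| / (n : ℝ) ^ j)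
        Filter.atTop = C₁ ∧
     Filter.limsup
        (fun j : ℕ => |(locFun1 n a₁' j : ℝ) - (locFun1 n a₂' j : ℝ)| / (n : ℝ) ^ j)
        Filter.atTop = C₂) ∨
    (Filter.liminf
        (fun j : ℕ => |(locFun1 n a₁' j : ℝ) - (locFun1 n a₂' j : ℝ)| / (n : ℝ) ^ j)
        Filter.atTop = 1 - C₂ ∧
     Filter.limsup
        (fun j : ℕ => |(locFun1 n a₁' j : ℝ) - (locFun1 n a₂' j : ℝ)| / (n : ℝ) ^ j)
        Filter.atTop = 1 - C₁) := by
  have hn1 : (1 : ℝ) < n := by exact_mod_cast hn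
  obtain ⟨k₁, hk₁, e₁⟩ := eventually_const_shift hn ha₁ ha₁' h₁
  obtain ⟨k₂, hk₂, e₂⟩ := eventually_const_shift hn ha₂ ha₂' h₂
  have hu := normalized_diff_mem_Icc hn ha₁ ha₂
  have hv := normalized_diff_mem_Icc hn ha₁' ha₂'
  set c : ℝ := (δ₁ - δ₁') - (δ₂ - δ₂') with hc
  have hε : Tendsto (fun j : ℕ => |c / (n : ℝ) ^ j|) atTop (𝓝 0) := by
    have := (tendsto_pow_atTop_atTop_of_one_lt hn1).const_div_atTop c
    simpa using this.abs
  have key : ∀ᶠ j : ℕ in atTop,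
      ((locFun1 n a₁' j : ℝ) - locFun1 n a₂' j) / (n : ℝ) ^ j =
        ((locFun1 n a₁ j : ℝ) - locFun1 n a₂ j) / (n : ℝ) ^ j + c / (n : ℝ) ^ j
          + ((k₁ - k₂ : ℤ) : ℝ) := by
    filter_upwards [e₁, e₂] with j e₁ e₂
    have hp : (n : ℝ) ^ j ≠ 0 := by positivity
    rw [e₁, e₂, hc]
    push_cast
    field_simp
    ring
  have habs : ∀ (z : ℝ) (j : ℕ), |z| / (n : ℝ) ^ j = |z / (n : ℝ) ^ j| := fun z j => by
    rw [abs_div, abs_of_pos (by positivity : (0 : ℝ) < (n : ℝ) ^ j)]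
  have hcases : (k₁ - k₂ = 0 ∨ k₁ - k₂ = 2 ∨ k₁ - k₂ = -2) ∨ (k₁ - k₂ = 1 ∨ k₁ - k₂ = -1) := by
    rw [abs_le] at hk₁ hk₂
    omega
  rcases hcases with hk | hk
  · left
    have ht : Tendsto (fun j : ℕ =>
        |(locFun1 n a₁' j : ℝ) - (locFun1 n a₂' j : ℝ)| / (n : ℝ) ^ j -
        |(locFun1 n a₁ j : ℝ) - (locFun1 n a₂ j : ℝ)| / (n : ℝ) ^ j) atTop (𝓝 0) := by
      refine squeeze_zero_norm' ?_ hε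
      filter_upwards [key] with j hj
      have h1 := (hu j).2
      have h2 := (hv j).2
      rw [habs] at h1 h2
      rw [habs, habs, Real.norm_eq_abs]
      exact abs_norm_diff_le_of_even h1 h2 hj hk
    rw [hC₁, hC₂]
    exact ⟨liminf_eq_of_sub_tendsto hu hv ht, limsup_eq_of_sub_tendsto hu hv ht⟩
  · right
    have ht : Tendsto (fun j : ℕ =>
        |(locFun1 n a₁' j : ℝ) - (locFun1 n a₂' j : ℝ)| / (n : ℝ) ^ j -
        (1 - |(locFun1 n a₁ j : ℝ) - (locFun1 n a₂ j : ℝ)| / (n : ℝ) ^ j)) atTop (𝓝 0) := by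
      refine squeeze_zero_norm' ?_ (by simpa using hε.const_mul 3)
      filter_upwards [key] with j hj
      have h1 := (hu j).2
      have h2 := (hv j).2
      rw [habs] at h1 h2
      rw [habs, habs, Real.norm_eq_abs]
      exact abs_norm_diff_le_of_odd h1 h2 hj hk
    rw [hC₁, hC₂, ← liminf_one_sub hu, ← limsup_one_sub hu]
    exact ⟨liminf_eq_of_sub_tendsto (one_sub_mem_Icc hu) hv ht,
      limsup_eq_of_sub_tendsto (one_sub_mem_Icc hu) hv ht⟩
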